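/- For every positive integer n, u(n, n+2) = ε(n, n+2) = ⌊(2n+4)/3⌋, where u and ε denote the maximum stopping distance and maximum distance over all binary n×(n+2) matrices. -/

import Mathlib

/-- The stopping distance of a binary matrix `A`: the minimum cardinality of a nonempty
1-free set of columns of `A` (a set of columns is 1-free if no row sums to exactly `1`
over that set). -/
noncomputable def stoppingDistance {m n : ℕ} (A : Fin m → Fin n → ℕ) : ℕ :=
  sInf {c | ∃ S : Finset (Fin n), S.Nonempty ∧ (∀ i, ∑ j ∈ S, A i j ≠ 1) ∧ S.card = c}

/-- The distance of (the code with parity-check matrix) a binary matrix `A`: the minimum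
cardinality of a nonempty even set of columns of `A`. -/
noncomputable def codeDistance {m n : ℕ} (A : Fin m → Fin n → ℕ) : ℕ :=
  sInf {c | ∃ S : Finset (Fin n), S.Nonempty ∧ (∀ i, Even (∑ j ∈ S, A i j)) ∧ S.card = c}

/-- `u m n`: the maximum stopping distance over all `m × n` binary matrices. -/
noncomputable def maxStoppingDistance (m n : ℕ) : ℕ :=
  sSup {d | ∃ A : Fin m → Fin n → ℕ, (∀ i j, A i j ≤ 1) ∧ stoppingDistance A = d}

/-- `ε m n`: the maximum distance over all `m × n` binary matrices. -/
noncomputable def maxCodeDistance (m n : ℕ) : ℕ :=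
  sSup {d | ∃ A : Fin m → Fin n → ℕ, (∀ i j, A i j ≤ 1) ∧ codeDistance A = d}

/-!
Any `m + 2` columns contain two nonempty even sets `S ≠ T`: parities of column sums take only
`2 ^ m` values, so two different sets of columns agree and their symmetric difference is even, and
`T` is found among the columns other than a chosen `k ∈ S`. Then `S ∆ T` is a third nonempty even
set. Every column in `S ∪ T` lies in exactly two of the three, so the smallest of them has at most
`2 * (m + 2) / 3` elements.

For the lower bound, arrange the columns in three stars, one for each residue mod `3`. The rows are
the edges of the stars and one further row consisting of the three centres. An edge row forces a
`1`-free set to be a union of stars, and the row of centres forces it to contain two of them, so it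
omits at most one star.
-/

open Finset
open scoped symmDiff

section EvenSets

variable {ι κ : Type*}

/-- A set `S` of columns of `A` is `1`-free if no entry of the sum of its columns equals `1`.
The empty set is allowed. -/
def IsOneFree (A : ι → κ → ℕ) (S : Finset κ) : Prop :=
  ∀ i, ∑ j ∈ S, A i j ≠ 1

/-- A set `S` of columns of `A` is even if every entry of the sum of its columns is even; over
`ZMod 2`, these are the supports of the vectors in the kernel of `A`. The empty set is allowed. -/
def IsEvenSet (A : ι → κ → ℕ) (S : Finset κ) : Prop :=
  ∀ i, Even (∑ j ∈ S, A i j)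

theorem IsEvenSet.isOneFree {A : ι → κ → ℕ} {S : Finset κ} (hS : IsEvenSet A S) :
    IsOneFree A S :=
  fun i hi ↦ Nat.not_even_one (hi ▸ hS i)

variable [DecidableEq κ]

theorem sum_symmDiff_add_two_nsmul_sum_inter {M : Type*} [AddCommMonoid M] (S T : Finset κ)
    (f : κ → M) :
    ∑ j ∈ S ∆ T, f j + 2 • ∑ j ∈ S ∩ T, f j = ∑ j ∈ S, f j + ∑ j ∈ T, f j := by
  rw [symmDiff_def, sup_eq_union, sum_union disjoint_sdiff_sdiff, two_nsmul,
    ← sum_inter_add_sum_sdiff S T f, ← sum_inter_add_sum_sdiff T S f, inter_comm T S]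
  abel

theorem card_add_card_add_card_symmDiff (S T : Finset κ) :
    #S + #T + #(S ∆ T) = 2 * #(S ∪ T) := by
  have hsymm : #(S ∆ T) + 2 * #(S ∩ T) = #S + #T := by
    simpa only [sum_const, smul_eq_mul, mul_one] using
      sum_symmDiff_add_two_nsmul_sum_inter S T fun _ ↦ (1 : ℕ)
  have hunion := card_union_add_card_inter S T
  omega

theorem even_sum_symmDiff_iff (S T : Finset κ) (f : κ → ℕ) :
    Even (∑ j ∈ S ∆ T, f j) ↔ (Even (∑ j ∈ S, f j) ↔ Even (∑ j ∈ T, f j)) := by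
  rw [← Nat.even_add, ← sum_symmDiff_add_two_nsmul_sum_inter, smul_eq_mul, Nat.even_add]
  simp only [even_two_mul, iff_true]

theorem IsEvenSet.symmDiff {A : ι → κ → ℕ} {S T : Finset κ} (hS : IsEvenSet A S)
    (hT : IsEvenSet A T) : IsEvenSet A (S ∆ T) :=
  fun i ↦ (even_sum_symmDiff_iff S T (A i)).2 (iff_of_true (hS i) (hT i))

end EvenSets

section SmallEvenSets

variable {ι κ : Type*} [Fintype ι]

theorem exists_subset_isEvenSet (A : ι → κ → ℕ) {U : Finset κ} (hU : Fintype.card ι < #U) :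
    ∃ S ⊆ U, S.Nonempty ∧ IsEvenSet A S := by
  classical
  have hcard : #(univ : Finset (ι → Prop)) < #U.powerset := by
    simpa using Nat.pow_lt_pow_right one_lt_two hU
  obtain ⟨S, hS, T, hT, hne, hparity⟩ := exists_ne_map_eq_of_card_lt_of_maps_to hcard
    (f := fun S i ↦ Even (∑ j ∈ S, A i j)) fun _ _ ↦ mem_coe.2 (mem_univ _)
  rw [mem_powerset] at hS hT
  refine ⟨S ∆ T, symmDiff_le_sup.trans (union_subset hS hT), ?_, fun i ↦ ?_⟩
  · simpa only [nonempty_iff_ne_empty, ← bot_eq_empty, ne_eq, symmDiff_eq_bot] using hne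
  · exact (even_sum_symmDiff_iff S T (A i)).2 (iff_of_eq (congrFun hparity i))

theorem exists_subset_isEvenSet_three_mul_card_le (A : ι → κ → ℕ) {U : Finset κ}
    (hU : Fintype.card ι + 2 ≤ #U) :
    ∃ S ⊆ U, S.Nonempty ∧ IsEvenSet A S ∧ 3 * #S ≤ 2 * #U := by
  classical
  obtain ⟨S, hSU, hS, hSeven⟩ := exists_subset_isEvenSet A (U := U) (by omega)
  obtain ⟨k, hk⟩ := hS
  obtain ⟨T, hTU, hT, hTeven⟩ := exists_subset_isEvenSet A (U := U.erase k)
    (by rw [card_erase_of_mem (hSU hk)]; omega)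
  obtain ⟨hTU, hkT⟩ := subset_erase.1 hTU
  have hsum := card_add_card_add_card_symmDiff S T
  have hunion : #(S ∪ T) ≤ #U := card_le_card (union_subset hSU hTU)
  by_cases hScard : 3 * #S ≤ 2 * #U
  · exact ⟨S, hSU, ⟨k, hk⟩, hSeven, hScard⟩
  by_cases hTcard : 3 * #T ≤ 2 * #U
  · exact ⟨T, hTU, hT, hTeven, hTcard⟩
  exact ⟨S ∆ T, symmDiff_le_sup.trans (union_subset hSU hTU),
    ⟨k, mem_symmDiff.2 (.inl ⟨hk, hkT⟩)⟩, hSeven.symmDiff hTeven, by omega⟩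

end SmallEvenSets

section Distances

variable {m n : ℕ} {A : Fin m → Fin n → ℕ}

theorem codeDistance_le_card {S : Finset (Fin n)} (hS : S.Nonempty) (hA : IsEvenSet A S) :
    codeDistance A ≤ #S :=
  Nat.sInf_le ⟨S, hS, hA, rfl⟩

theorem exists_isEvenSet_card_eq_codeDistance (A : Fin m → Fin n → ℕ) (hmn : m < n) :
    ∃ S : Finset (Fin n), S.Nonempty ∧ IsEvenSet A S ∧ #S = codeDistance A := by
  obtain ⟨S, -, hS, hA⟩ := exists_subset_isEvenSet A (U := univ) (by simpa using hmn)
  exact Nat.sInf_mem (s := {c | ∃ S : Finset (Fin n), S.Nonempty ∧ IsEvenSet A S ∧ #S = c})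
    ⟨#S, S, hS, hA, rfl⟩

theorem stoppingDistance_le_codeDistance (A : Fin m → Fin n → ℕ) (hmn : m < n) :
    stoppingDistance A ≤ codeDistance A := by
  obtain ⟨S, hS, hA, hcard⟩ := exists_isEvenSet_card_eq_codeDistance A hmn
  exact Nat.sInf_le ⟨S, hS, hA.isOneFree, hcard⟩

theorem le_stoppingDistance {d : ℕ} (hmn : m < n)
    (hd : ∀ S : Finset (Fin n), S.Nonempty → IsOneFree A S → d ≤ #S) :
    d ≤ stoppingDistance A := by
  -- Since `sInf ∅ = 0`, a lower bound requires some nonempty `1`-free set.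
  obtain ⟨S, hS, hA, -⟩ := exists_isEvenSet_card_eq_codeDistance A hmn
  refine le_csInf ⟨#S, S, hS, hA.isOneFree, rfl⟩ ?_
  rintro _ ⟨T, hT, hTfree, rfl⟩
  exact hd T hT hTfree

theorem three_mul_codeDistance_le (A : Fin m → Fin n → ℕ) (hmn : m + 2 ≤ n) :
    3 * codeDistance A ≤ 2 * n := by
  obtain ⟨S, -, hS, hA, hcard⟩ :=
    exists_subset_isEvenSet_three_mul_card_le A (U := univ) (by simpa using hmn)
  have hle := codeDistance_le_card hS hA
  rw [card_fin] at hcard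
  omega

end Distances

section IncidenceMatrices

variable {ι κ : Type*} [DecidableEq κ]

/-- The binary matrix whose `i`-th row is the indicator function of `R i`. -/
def incidenceMatrix (R : ι → Finset κ) (i : ι) (j : κ) : ℕ :=
  if j ∈ R i then 1 else 0

theorem incidenceMatrix_le_one (R : ι → Finset κ) (i : ι) (j : κ) :
    incidenceMatrix R i j ≤ 1 := by
  unfold incidenceMatrix
  split_ifs <;> simp

theorem isOneFree_incidenceMatrix_iff {R : ι → Finset κ} {S : Finset κ} :
    IsOneFree (incidenceMatrix R) S ↔ ∀ i, #(S ∩ R i) ≠ 1 := by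
  simp only [IsOneFree, incidenceMatrix, sum_boole, filter_mem_eq_inter, Nat.cast_id]

theorem mem_iff_mem_of_card_inter_pair_ne_one {S : Finset κ} {a b : κ}
    (hS : #(S ∩ {a, b}) ≠ 1) : a ∈ S ↔ b ∈ S := by
  by_cases ha : a ∈ S <;> by_cases hb : b ∈ S
  · exact iff_of_true ha hb
  · simp [inter_insert_of_mem ha, inter_singleton_of_notMem hb] at hS
  · simp [inter_insert_of_notMem ha, inter_singleton_of_mem hb] at hS
  · exact iff_of_false ha hb

end IncidenceMatrices

section Stars

theorem card_filter_val_modEq_le (N v : ℕ) {r : ℕ} (hr : 0 < r) :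
    #{x : Fin N | x.val ≡ v [MOD r]} ≤ N ⌈/⌉ r := by
  have hcount : #{x : Fin N | x.val ≡ v [MOD r]} = N.count (· ≡ v [MOD r]) := by
    rw [Nat.count_eq_card_filter_range, card_filter, card_filter,
      Fin.sum_univ_eq_sum_range fun x ↦ if x ≡ v [MOD r] then 1 else 0]
  rw [hcount, Nat.count_modEq_card N hr, Nat.ceilDiv_eq_add_pred_div, Nat.le_div_iff_mul_le hr,
    add_mul]
  have hdiv := Nat.div_add_mod' N r
  split_ifs <;> omega

variable {m : ℕ}

/-- The centre of the star containing the column `j`, namely the residue of `j` modulo `3`. -/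
def starCentre (j : Fin (m + 3)) : Fin (m + 3) :=
  ⟨j % 3, (Nat.mod_lt _ three_pos).trans_le (Nat.le_add_left 3 m)⟩

/-- The rows of the extremal matrix, as sets of columns: the `m` edges of the three stars with
centres `0`, `1`, `2`, followed by the set of the three centres. -/
def starRows (m : ℕ) : Fin (m + 1) → Finset (Fin (m + 3)) :=
  Fin.snoc (α := fun _ ↦ Finset (Fin (m + 3)))
    (fun i ↦ {i.addNat 3, starCentre (i.addNat 3)}) {j | j.val < 3}

theorem mem_iff_starCentre_mem {S : Finset (Fin (m + 3))}
    (hS : IsOneFree (incidenceMatrix (starRows m)) S) (x : Fin (m + 3)) :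
    x ∈ S ↔ starCentre x ∈ S := by
  rcases lt_or_ge x.val 3 with hx | hx
  · rw [show starCentre x = x from Fin.ext (Nat.mod_eq_of_lt hx)]
  · obtain ⟨i, rfl⟩ : ∃ i : Fin m, i.addNat 3 = x := ⟨x.subNat 3 hx, Fin.addNat_subNat hx⟩
    have hrow := isOneFree_incidenceMatrix_iff.1 hS i.castSucc
    rw [starRows, Fin.snoc_castSucc] at hrow
    exact mem_iff_mem_of_card_inter_pair_ne_one hrow

theorem exists_ne_centres_of_isOneFree_starRows {S : Finset (Fin (m + 3))} (hne : S.Nonempty)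
    (hS : IsOneFree (incidenceMatrix (starRows m)) S) :
    ∃ a ∈ S, ∃ b ∈ S, a.val < 3 ∧ b.val < 3 ∧ a ≠ b := by
  obtain ⟨x, hx⟩ := hne
  have hrow := isOneFree_incidenceMatrix_iff.1 hS (Fin.last m)
  rw [starRows, Fin.snoc_last] at hrow
  have hcentre : starCentre x ∈ S ∩ ({j | j.val < 3} : Finset (Fin (m + 3))) :=
    mem_inter.2 ⟨(mem_iff_starCentre_mem hS x).1 hx,
      mem_filter.2 ⟨mem_univ _, Nat.mod_lt _ three_pos⟩⟩
  have hcard := lt_of_le_of_ne' (card_pos.2 ⟨_, hcentre⟩) hrow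
  obtain ⟨a, ha, b, hb, hab⟩ := one_lt_card.1 hcard
  simp only [mem_inter, mem_filter, mem_univ, true_and] at ha hb
  exact ⟨a, ha.1, b, hb.1, ha.2, hb.2, hab⟩

theorem card_compl_le_of_isOneFree_starRows {S : Finset (Fin (m + 3))} (hne : S.Nonempty)
    (hS : IsOneFree (incidenceMatrix (starRows m)) S) : #Sᶜ ≤ (m + 3) ⌈/⌉ 3 := by
  obtain ⟨a, ha, b, hb, ha3, hb3, hab⟩ := exists_ne_centres_of_isOneFree_starRows hne hS
  -- The third centre is `3 - a - b`, because the centres `0`, `1`, `2` add up to `3`.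
  refine le_trans (card_le_card fun x hx ↦ ?_)
    (card_filter_val_modEq_le (m + 3) (3 - a - b) three_pos)
  have hcentre : starCentre x ∉ S := (mem_iff_starCentre_mem hS x).not.1 (mem_compl.1 hx)
  have hxa : x.val % 3 ≠ a := fun h ↦ hcentre ((Fin.ext h : starCentre x = a) ▸ ha)
  have hxb : x.val % 3 ≠ b := fun h ↦ hcentre ((Fin.ext h : starCentre x = b) ▸ hb)
  have hab' : a.val ≠ b := Fin.val_ne_of_ne hab
  rw [mem_filter, Nat.ModEq]
  exact ⟨mem_univ x, by omega⟩

theorem two_mul_div_three_le_stoppingDistance_starRows (m : ℕ) :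
    2 * (m + 3) / 3 ≤ stoppingDistance (incidenceMatrix (starRows m)) := by
  refine le_stoppingDistance (by omega) fun S hne hS ↦ ?_
  have hcompl := card_compl_le_of_isOneFree_starRows hne hS
  have hadd := card_add_card_compl S
  rw [Nat.ceilDiv_eq_add_pred_div] at hcompl
  rw [Fintype.card_fin] at hadd
  omega

end Stars

/-- For every positive integer `n`, `u(n, n+2) = ε(n, n+2) = ⌊(2n+4)/3⌋`. -/
theorem stmt_16 (n : ℕ) (hn : 0 < n) :
    maxStoppingDistance n (n + 2) = (2 * n + 4) / 3 ∧
    maxCodeDistance n (n + 2) = (2 * n + 4) / 3 := by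
  have hle (A : Fin n → Fin (n + 2) → ℕ) : stoppingDistance A ≤ codeDistance A :=
    stoppingDistance_le_codeDistance A (by omega)
  have hupper (A : Fin n → Fin (n + 2) → ℕ) : codeDistance A ≤ (2 * n + 4) / 3 := by
    have hcode := three_mul_codeDistance_le A le_rfl
    omega
  obtain ⟨A, hA, hlower⟩ : ∃ A : Fin n → Fin (n + 2) → ℕ,
      (∀ i j, A i j ≤ 1) ∧ (2 * n + 4) / 3 ≤ stoppingDistance A := by
    obtain ⟨m, rfl⟩ := Nat.exists_eq_add_one.2 hn
    exact ⟨incidenceMatrix (starRows m), incidenceMatrix_le_one _,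
      two_mul_div_three_le_stoppingDistance_starRows m⟩
  constructor
  · refine IsGreatest.csSup_eq ⟨⟨A, hA, ((hle A).trans (hupper A)).antisymm hlower⟩, ?_⟩
    rintro _ ⟨B, -, rfl⟩
    exact (hle B).trans (hupper B)
  · refine IsGreatest.csSup_eq ⟨⟨A, hA, (hupper A).antisymm (hlower.trans (hle A))⟩, ?_⟩
    rintro _ ⟨B, -, rfl⟩
    exact hupper B
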